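/- Let X and Y be metric spaces and let f : X → Y be a surjective map that is coarse and coarsely n-to-1 (n ≥ 1). Then X has finite asymptotic dimension if and only if Y has finite asymptotic dimension; that is, there exists k such that for every R > 0 there is a uniformly bounded cover of X with Lebesgue number at least R and multiplicity at most k, if and only if there exists k' such that for every R > 0 there is a uniformly bounded cover of Y with Lebesgue number at least R and multiplicity at most k'. -/

import Mathlib

open Metric Set

/-- A set `U` is uniformly bounded by `D`: all pairwise distances are at most `D`. -/
def UBdd {X : Type*} [MetricSpace X] (D : ℝ) (U : Set X) : Prop :=
  ∀ x ∈ U, ∀ y ∈ U, dist x y ≤ D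

/-- A family of subsets covers `X`. -/
def IsCover {X : Type*} (𝒱 : Set (Set X)) : Prop := ∀ x : X, ∃ U ∈ 𝒱, x ∈ U

/-- The cover `𝒱` has Lebesgue number at least `R`: every open `R`-ball is
contained in some member of `𝒱`. -/
def LebAtLeast {X : Type*} [MetricSpace X] (R : ℝ) (𝒱 : Set (Set X)) : Prop :=
  ∀ x : X, ∃ U ∈ 𝒱, Metric.ball x R ⊆ U

/-- The family `𝒱` has multiplicity at most `m`: every point belongs to at most
`m` members of `𝒱`. -/
def MultAtMost {X : Type*} (m : ℕ) (𝒱 : Set (Set X)) : Prop :=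
  ∀ x : X, {U ∈ 𝒱 | x ∈ U}.Finite ∧ {U ∈ 𝒱 | x ∈ U}.ncard ≤ m

/-- The family `𝒱` is `R`-disjoint: points of distinct members are at distance at least `R`. -/
def RDisjoint {X : Type*} [MetricSpace X] (R : ℝ) (𝒱 : Set (Set X)) : Prop :=
  ∀ A ∈ 𝒱, ∀ B ∈ 𝒱, A ≠ B → ∀ a ∈ A, ∀ b ∈ B, R ≤ dist a b

/-- A map is coarse (bornologous). -/
def Coarse {X Y : Type*} [MetricSpace X] [MetricSpace Y] (f : X → Y) : Prop :=
  ∀ R > (0:ℝ), ∃ S > (0:ℝ), ∀ x x' : X, dist x x' ≤ R → dist (f x) (f x') ≤ S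

/-- A map is coarsely `n`-to-`1`: preimages of sets of diameter at most `R` can be covered
by at most `n` sets of diameter at most `S`, where `S` depends only on `R`. -/
def CoarselyNTo1 {X Y : Type*} [MetricSpace X] [MetricSpace Y] (n : ℕ) (f : X → Y) : Prop :=
  ∀ R > (0:ℝ), ∃ S > (0:ℝ), ∀ A : Set Y, UBdd R A →
    ∃ B : Fin n → Set X, f ⁻¹' A ⊆ ⋃ i, B i ∧ ∀ i, UBdd S (B i)

/-- The star of a set `B` with respect to a family `𝒰`: the union of all members of `𝒰`
meeting `B`. -/
def StarOf {X : Type*} (B : Set X) (𝒰 : Set (Set X)) : Set X :=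
  ⋃₀ {U ∈ 𝒰 | (U ∩ B).Nonempty}

/-!
Covers are transported along `f` in both directions, each time at the cost of a factor `n` in the
multiplicity.

To push a cover of `X` forward, keep only the points of each member `U` whose `r`-ball lies in `U`,
take the image and thicken it in `Y`. If the result contains `y`, then some kept point of `U` lies
in the preimage of a ball about `y`, hence in one of the `n` sets of diameter less than `r` covering
that preimage. All of that set then lies in `U`, so the multiplicity at one of its points bounds the
number of such `U`.

To pull a cover of `Y` back, split the preimage of each member into its `n` bounded pieces and
thicken every piece inside that preimage: each of the `n` families so obtained has at most the
multiplicity of the original cover.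
-/

section CoarseGeometry

variable {X Y ι : Type*}

section Multiplicity

theorem multAtMost_iff_encard_le {m : ℕ} {𝒱 : Set (Set X)} :
    MultAtMost m 𝒱 ↔ ∀ x, {U ∈ 𝒱 | x ∈ U}.encard ≤ m :=
  forall_congr' fun _ => encard_le_coe_iff_finite_ncard_le.symm

theorem encard_iUnion_le_card_mul [Fintype ι] {s : ι → Set X} {k : ℕ}
    (hs : ∀ i, (s i).encard ≤ k) : (⋃ i, s i).encard ≤ ↑(Fintype.card ι * k) :=
  calc (⋃ i, s i).encard
    _ ≤ ∑ i, (s i).encard := encard_iUnion_le_of_fintype s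
    _ ≤ ∑ _i : ι, (k : ℕ∞) := Finset.sum_le_sum fun i _ => hs i
    _ = ↑(Fintype.card ι * k) := by simp

theorem MultAtMost.iUnion [Fintype ι] {k : ℕ} {𝒱 : ι → Set (Set X)}
    (h𝒱 : ∀ i, MultAtMost k (𝒱 i)) : MultAtMost (Fintype.card ι * k) (⋃ i, 𝒱 i) := by
  rw [multAtMost_iff_encard_le]
  intro x
  have hsplit : {U ∈ ⋃ i, 𝒱 i | x ∈ U} = ⋃ i, {U ∈ 𝒱 i | x ∈ U} := by ext; simp
  rw [hsplit]
  exact encard_iUnion_le_card_mul fun i => multAtMost_iff_encard_le.1 (h𝒱 i) x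

theorem multAtMost_image {m : ℕ} {𝒱 : Set (Set X)} {g : Set X → Set Y}
    (hg : ∀ y, {U ∈ 𝒱 | y ∈ g U}.encard ≤ m) : MultAtMost m (g '' 𝒱) := by
  rw [multAtMost_iff_encard_le]
  intro y
  have himage : {W ∈ g '' 𝒱 | y ∈ W} = g '' {U ∈ 𝒱 | y ∈ g U} := by aesop
  rw [himage]
  exact (encard_image_le g _).trans (hg y)

theorem MultAtMost.image_of_subset_preimage {m : ℕ} {𝒲 : Set (Set Y)} {f : X → Y}
    {g : Set Y → Set X} (h𝒲 : MultAtMost m 𝒲) (hg : ∀ W ∈ 𝒲, g W ⊆ f ⁻¹' W) :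
    MultAtMost m (g '' 𝒲) :=
  multAtMost_image fun x =>
    have hsub : {W ∈ 𝒲 | x ∈ g W} ⊆ {W ∈ 𝒲 | f x ∈ W} := fun W hW => ⟨hW.1, hg W hW.1 hW.2⟩
    (encard_le_encard hsub).trans (multAtMost_iff_encard_le.1 h𝒲 (f x))

end Multiplicity

section Erosion

/-- The erosion of `U` by `r`: the centres of the `r`-balls contained in `U`. It is the counterpart
of `Metric.thickening`, and serves to shrink the members of a cover of Lebesgue number at least `r`
while still covering. -/
def erosion [PseudoMetricSpace X] (r : ℝ) (U : Set X) : Set X :=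
  {x | ball x r ⊆ U}

theorem erosion_subset [PseudoMetricSpace X] {r : ℝ} (hr : 0 < r) (U : Set X) :
    erosion r U ⊆ U :=
  fun _ hx => hx (mem_ball_self hr)

variable [MetricSpace X]

theorem UBdd.subset_of_erosion_inter_nonempty {S r : ℝ} {B U : Set X} (hB : UBdd S B)
    (hSr : S < r) (hBU : (erosion r U ∩ B).Nonempty) : B ⊆ U := by
  obtain ⟨x, hxU, hxB⟩ := hBU
  exact fun b hb => hxU ((hB b hb x hxB).trans_lt hSr)

theorem MultAtMost.encard_erosion_inter_nonempty_le {k : ℕ} {S r : ℝ} {𝒱 : Set (Set X)}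
    {B : Set X} (h𝒱 : MultAtMost k 𝒱) (hB : UBdd S B) (hSr : S < r) :
    {U ∈ 𝒱 | (erosion r U ∩ B).Nonempty}.encard ≤ k := by
  rcases B.eq_empty_or_nonempty with rfl | ⟨b, hb⟩
  · simp
  · have hsub : {U ∈ 𝒱 | (erosion r U ∩ B).Nonempty} ⊆ {U ∈ 𝒱 | b ∈ U} :=
      fun U hU => ⟨hU.1, hB.subset_of_erosion_inter_nonempty hSr hU.2 hb⟩
    exact (encard_le_encard hsub).trans (multAtMost_iff_encard_le.1 h𝒱 b)

theorem MultAtMost.encard_erosion_inter_nonempty_le_card_mul [Fintype ι] {k : ℕ} {S r : ℝ}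
    {𝒱 : Set (Set X)} {A : Set X} {B : ι → Set X} (h𝒱 : MultAtMost k 𝒱) (hA : A ⊆ ⋃ i, B i)
    (hB : ∀ i, UBdd S (B i)) (hSr : S < r) :
    {U ∈ 𝒱 | (erosion r U ∩ A).Nonempty}.encard ≤ ↑(Fintype.card ι * k) := by
  have hsub : {U ∈ 𝒱 | (erosion r U ∩ A).Nonempty} ⊆
      ⋃ i, {U ∈ 𝒱 | (erosion r U ∩ B i).Nonempty} := by
    rintro U ⟨hU, x, hxU, hxA⟩
    obtain ⟨i, hxB⟩ := mem_iUnion.1 (hA hxA)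
    exact mem_iUnion.2 ⟨i, hU, x, hxU, hxB⟩
  exact (encard_le_encard hsub).trans
    (encard_iUnion_le_card_mul fun i => h𝒱.encard_erosion_inter_nonempty_le (hB i) hSr)

end Erosion

section Coarse

variable [MetricSpace X] [MetricSpace Y] {f : X → Y}

theorem UBdd.mono {D : ℝ} {A B : Set X} (hB : UBdd D B) (hAB : A ⊆ B) : UBdd D A :=
  fun x hx y hy => hB x (hAB hx) y (hAB hy)

theorem UBdd.thickening {D : ℝ} {A : Set X} (hA : UBdd D A) (s : ℝ) :
    UBdd (D + 2 * s) (thickening s A) := by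
  intro x hx y hy
  obtain ⟨a, ha, hxa⟩ := mem_thickening_iff.1 hx
  obtain ⟨b, hb, hyb⟩ := mem_thickening_iff.1 hy
  calc dist x y
    _ ≤ dist x a + dist a b + dist b y := dist_triangle4 x a b y
    _ ≤ s + D + s := by
      rw [dist_comm b y]
      gcongr
      exact hA a ha b hb
    _ = D + 2 * s := by ring

theorem ubdd_ball (x : X) (s : ℝ) : UBdd (2 * s) (ball x s) := by
  have hx : UBdd 0 {x} := by simp [UBdd]
  simpa only [thickening_singleton, zero_add] using hx.thickening s

theorem LebAtLeast.isCover {R : ℝ} {𝒱 : Set (Set X)} (h𝒱 : LebAtLeast R 𝒱) (hR : 0 < R) :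
    IsCover 𝒱 := by
  intro x
  obtain ⟨U, hU, hxU⟩ := h𝒱 x
  exact ⟨U, hU, hxU (mem_ball_self hR)⟩

theorem Coarse.exists_ubdd_image (hf : Coarse f) {D : ℝ} (hD : 0 < D) :
    ∃ E > 0, ∀ U : Set X, UBdd D U → UBdd E (f '' U) := by
  obtain ⟨E, hE, hfE⟩ := hf D hD
  refine ⟨E, hE, fun U hU => ?_⟩
  rintro _ ⟨x, hx, rfl⟩ _ ⟨x', hx', rfl⟩
  exact hfE x x' (hU x hx x' hx')

theorem Coarse.exists_ball_subset_preimage_ball (hf : Coarse f) {R : ℝ} (hR : 0 < R) :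
    ∃ r > 0, ∀ x, ball x R ⊆ f ⁻¹' ball (f x) r := by
  obtain ⟨S, hS, hfS⟩ := hf R hR
  exact ⟨S + 1, by positivity, fun x z hz => (hfS z x (le_of_lt hz)).trans_lt (lt_add_one S)⟩

end Coarse

section CoarselySurjective

variable [PseudoMetricSpace Y] {f : X → Y}

/-- A map is coarsely surjective if every point of the target is within a fixed distance of the
image. It weakens surjectivity to what the transfer of covers to `Y` needs. -/
def CoarselySurjective (f : X → Y) : Prop :=
  ∃ C ≥ (0 : ℝ), ∀ y, ∃ x, dist y (f x) ≤ C

theorem CoarselySurjective.of_surjective (hf : Function.Surjective f) : CoarselySurjective f :=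
  ⟨0, le_rfl, fun y => (hf y).imp fun _ hx => by simp [hx]⟩

end CoarselySurjective

section Pushforward

variable [PseudoMetricSpace X] [PseudoMetricSpace Y]

/-- The push-forward of a family `𝒱` along `f`, used to carry covers from `X` to `Y`: every member
is eroded by `r`, mapped by `f` and thickened by `s`. -/
def pushforward (f : X → Y) (r s : ℝ) (𝒱 : Set (Set X)) : Set (Set Y) :=
  (fun U => thickening s (f '' erosion r U)) '' 𝒱

theorem mem_thickening_image_erosion {f : X → Y} {r s : ℝ} {U : Set X} {y : Y} :
    y ∈ thickening s (f '' erosion r U) ↔ (erosion r U ∩ f ⁻¹' ball y s).Nonempty := by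
  simp only [mem_thickening_iff, exists_mem_image, mem_preimage, mem_ball', Set.Nonempty,
    mem_inter_iff]

end Pushforward

section PushforwardCover

variable [MetricSpace X] [MetricSpace Y] {f : X → Y} {r s : ℝ} {𝒱 : Set (Set X)}

theorem UBdd.pushforward {D E : ℝ} (hfE : ∀ U : Set X, UBdd D U → UBdd E (f '' U)) (hr : 0 < r)
    (h𝒱 : ∀ U ∈ 𝒱, UBdd D U) : ∀ W ∈ pushforward f r s 𝒱, UBdd (E + 2 * s) W := by
  rintro _ ⟨U, hU, rfl⟩
  exact (hfE _ ((h𝒱 U hU).mono (erosion_subset hr U))).thickening s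

theorem LebAtLeast.pushforward {C R : ℝ} (hC : ∀ y, ∃ x, dist y (f x) ≤ C)
    (h𝒱 : LebAtLeast r 𝒱) : LebAtLeast R (pushforward f r (R + C) 𝒱) := by
  intro y
  obtain ⟨x, hyx⟩ := hC y
  obtain ⟨U, hU, hxU⟩ := h𝒱 x
  refine ⟨_, mem_image_of_mem _ hU, fun z hz => ?_⟩
  refine mem_thickening_iff.2 ⟨f x, mem_image_of_mem f hxU, ?_⟩
  exact (dist_triangle z y (f x)).trans_lt (add_lt_add_of_lt_of_le hz hyx)

theorem MultAtMost.pushforward [Fintype ι] {k : ℕ} {S : ℝ} (h𝒱 : MultAtMost k 𝒱) (hSr : S < r)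
    (hf : ∀ y, ∃ B : ι → Set X, f ⁻¹' ball y s ⊆ ⋃ i, B i ∧ ∀ i, UBdd S (B i)) :
    MultAtMost (Fintype.card ι * k) (pushforward f r s 𝒱) := by
  refine multAtMost_image fun y => ?_
  obtain ⟨B, hcover, hB⟩ := hf y
  simpa only [mem_thickening_image_erosion] using
    h𝒱.encard_erosion_inter_nonempty_le_card_mul hcover hB hSr

end PushforwardCover

section Pullback

/-- The pull-back of a family `𝒲` along `f`, used to carry covers from `Y` to `X`: the preimage of
each `W ∈ 𝒲` is replaced by the `R`-thickenings, within `f ⁻¹' W`, of the pieces `B W i` into which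
it is divided. -/
def pullback [PseudoMetricSpace X] (f : X → Y) (B : Set Y → ι → Set X) (R : ℝ)
    (𝒲 : Set (Set Y)) : Set (Set X) :=
  ⋃ i, (fun W => f ⁻¹' W ∩ thickening R (B W i)) '' 𝒲

variable [MetricSpace X] {f : X → Y} {B : Set Y → ι → Set X} {R : ℝ} {𝒲 : Set (Set Y)}

theorem UBdd.pullback {T : ℝ} (hB : ∀ W ∈ 𝒲, ∀ i, UBdd T (B W i)) :
    ∀ U ∈ pullback f B R 𝒲, UBdd (T + 2 * R) U := by
  intro U hU
  obtain ⟨i, W, hW, rfl⟩ := mem_iUnion.1 hU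
  exact ((hB W hW i).thickening R).mono inter_subset_right

theorem LebAtLeast.pullback [MetricSpace Y] {r : ℝ} (hr : 0 < r) (h𝒲 : LebAtLeast r 𝒲)
    (hf : ∀ x, ball x R ⊆ f ⁻¹' ball (f x) r) (hB : ∀ W ∈ 𝒲, f ⁻¹' W ⊆ ⋃ i, B W i) :
    LebAtLeast R (pullback f B R 𝒲) := by
  intro x
  obtain ⟨W, hW, hxW⟩ := h𝒲 (f x)
  obtain ⟨i, hxB⟩ := mem_iUnion.1 (hB W hW (hxW (mem_ball_self hr)))
  refine ⟨_, mem_iUnion.2 ⟨i, mem_image_of_mem _ hW⟩, subset_inter ?_ ?_⟩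
  · exact (hf x).trans (preimage_mono hxW)
  · exact ball_subset_thickening hxB R

theorem MultAtMost.pullback [Fintype ι] {k : ℕ} (h𝒲 : MultAtMost k 𝒲) :
    MultAtMost (Fintype.card ι * k) (pullback f B R 𝒲) :=
  .iUnion fun _ => h𝒲.image_of_subset_preimage fun _ _ => inter_subset_left

end Pullback

section AsymptoticDimension

/-- `AsdimLT X m` says that the asymptotic dimension of `X` is less than `m`: at every scale there
is a uniformly bounded cover of multiplicity at most `m`. Bounding multiplicity rather than
dimension avoids the usual shift by one. -/
def AsdimLT (X : Type*) [MetricSpace X] (m : ℕ) : Prop :=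
  ∀ R > (0 : ℝ), ∃ 𝒱 : Set (Set X), ∃ D > (0 : ℝ), IsCover 𝒱 ∧
    (∀ U ∈ 𝒱, UBdd D U) ∧ LebAtLeast R 𝒱 ∧ MultAtMost m 𝒱

/-- Finite asymptotic dimension, the property transferred between the source and the target of a
map. -/
def FiniteAsdim (X : Type*) [MetricSpace X] : Prop :=
  ∃ m : ℕ, AsdimLT X m

variable [MetricSpace X] [MetricSpace Y] {f : X → Y} {n k : ℕ}

theorem AsdimLT.map (hX : AsdimLT X k) (hsurj : CoarselySurjective f) (hcoarse : Coarse f)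
    (hnto1 : CoarselyNTo1 n f) : AsdimLT Y (n * k) := by
  intro R hR
  obtain ⟨C, hC, hfC⟩ := hsurj
  obtain ⟨S, hS, hpieces⟩ := hnto1 (2 * (R + C)) (by positivity)
  have hr : 0 < S + 1 := by positivity
  obtain ⟨𝒱, D, hD, -, hbdd, hleb, hmult⟩ := hX (S + 1) hr
  obtain ⟨E, hE, hfE⟩ := hcoarse.exists_ubdd_image hD
  have hleb' : LebAtLeast R (pushforward f (S + 1) (R + C) 𝒱) := hleb.pushforward hfC
  refine ⟨_, E + 2 * (R + C), by positivity, hleb'.isCover hR, .pushforward hfE hr hbdd, hleb', ?_⟩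
  simpa only [Fintype.card_fin] using
    hmult.pushforward (lt_add_one S) fun y => hpieces _ (ubdd_ball y (R + C))

theorem AsdimLT.comap (hY : AsdimLT Y k) (hcoarse : Coarse f) (hnto1 : CoarselyNTo1 n f) :
    AsdimLT X (n * k) := by
  intro R hR
  obtain ⟨r, hr, hball⟩ := hcoarse.exists_ball_subset_preimage_ball hR
  obtain ⟨𝒲, D, hD, -, hbdd, hleb, hmult⟩ := hY r hr
  obtain ⟨T, hT, hpieces⟩ := hnto1 D hD
  choose! B hcover hB using hpieces
  have hleb' : LebAtLeast R (pullback f B R 𝒲) :=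
    hleb.pullback hr hball fun W hW => hcover W (hbdd W hW)
  refine ⟨_, T + 2 * R, by positivity, hleb'.isCover hR,
    .pullback fun W hW => hB W (hbdd W hW), hleb', ?_⟩
  simpa only [Fintype.card_fin] using hmult.pullback (f := f) (B := B) (R := R)

theorem stmt8_general (hsurj : CoarselySurjective f) (hcoarse : Coarse f)
    (hnto1 : CoarselyNTo1 n f) : FiniteAsdim X ↔ FiniteAsdim Y :=
  ⟨fun ⟨_, hX⟩ => ⟨_, hX.map hsurj hcoarse hnto1⟩, fun ⟨_, hY⟩ => ⟨_, hY.comap hcoarse hnto1⟩⟩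

end AsymptoticDimension

end CoarseGeometry

/-- Finite asymptotic dimension is an invariant of surjective coarse, coarsely
`n`-to-`1` maps. -/
theorem stmt8 {X Y : Type*} [MetricSpace X] [MetricSpace Y] (n : ℕ) (hn : 1 ≤ n)
    (f : X → Y) (hsurj : Function.Surjective f) (hcoarse : Coarse f)
    (hnto1 : CoarselyNTo1 n f) :
    (∃ k : ℕ, ∀ R > (0:ℝ), ∃ 𝒱 : Set (Set X), ∃ D > (0:ℝ), IsCover 𝒱 ∧
      (∀ U ∈ 𝒱, UBdd D U) ∧ LebAtLeast R 𝒱 ∧ MultAtMost k 𝒱) ↔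
    (∃ k' : ℕ, ∀ R > (0:ℝ), ∃ 𝒲 : Set (Set Y), ∃ D > (0:ℝ), IsCover 𝒲 ∧
      (∀ W ∈ 𝒲, UBdd D W) ∧ LebAtLeast R 𝒲 ∧ MultAtMost k' 𝒲) :=
  stmt8_general (.of_surjective hsurj) hcoarse hnto1
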